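/- Let p, q ∈ ℝ^d be probability vectors with strictly positive entries, and for n ∈ ℕ let p^{⊗n}, q^{⊗n} ∈ ℝ^{d^n} denote their n-fold tensor powers. Define the smoothed min-divergence D_0^ε(p^{⊗n} ‖ q^{⊗n}) = sup { D_0(p̃ ‖ q^{⊗n}) : p̃ a probability vector on d^n outcomes with d(p̃, p^{⊗n}) ≤ ε }, where D_0(p̃‖Q) = −ln ∑_{i: p̃_i > 0} Q_i. Then lim_{ε→0^+} lim_{n→∞} (1/n) D_0^ε(p^{⊗n} ‖ q^{⊗n}) = D_1(p ‖ q) = ∑_i p_i ln(p_i/q_i). -/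

import Mathlib

open scoped BigOperators Topology
open Filter

/-- A probability vector: nonnegative entries summing to 1. -/
def IsProbVec {ι : Type*} [Fintype ι] (p : ι → ℝ) : Prop :=
  (∀ i, 0 ≤ p i) ∧ ∑ i, p i = 1

/-- The sum of the `k` largest entries of `p`, as the supremum of sums over subsets of size `k`. -/
noncomputable def topSum {ι : Type*} [Fintype ι] (p : ι → ℝ) (k : ℕ) : ℝ :=
  sSup {x : ℝ | ∃ s : Finset ι, s.card = k ∧ x = ∑ i ∈ s, p i}

/-- `p` majorizes `p'`: for every `1 ≤ k ≤ d`, the sum of the `k` largest entries of `p`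
is at least that of `p'`. -/
def Majorizes {ι : Type*} [Fintype ι] (p p' : ι → ℝ) : Prop :=
  ∀ k : ℕ, 1 ≤ k → k ≤ Fintype.card ι → topSum p' k ≤ topSum p k

/-- A column-stochastic matrix: nonnegative entries, each column sums to 1. -/
def ColStochastic {ι κ : Type*} [Fintype ι] [Fintype κ] (Λ : Matrix ι κ ℝ) : Prop :=
  (∀ i j, 0 ≤ Λ i j) ∧ ∀ j, ∑ i, Λ i j = 1

/-- A bistochastic (doubly stochastic) matrix. -/
def Bistochastic {ι : Type*} [Fintype ι] (A : Matrix ι ι ℝ) : Prop :=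
  (∀ i j, 0 ≤ A i j) ∧ (∀ i, ∑ j, A i j = 1) ∧ (∀ j, ∑ i, A i j = 1)

/-- Real power with the convention `0 ^ a = 0` (in particular `0 ^ 0 = 0`). -/
noncomputable def rpow0 (x a : ℝ) : ℝ := if x = 0 then 0 else x ^ a

/-- The classical Rényi divergence `D_α(p‖q)`, with the conventions `0^0 = 0`, `0·ln 0 = 0`;
for `α < 0` the prefactor is `1/(1-α)`, for `α ∈ [0,1)∪(1,∞)` it is `1/(α-1)`,
and `D_1` is the Kullback–Leibler divergence. -/
noncomputable def renyiD {ι : Type*} [Fintype ι] (α : ℝ) (p q : ι → ℝ) : ℝ :=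
  if α = 1 then ∑ i, p i * Real.log (p i / q i)
  else if α < 0 then (1 / (1 - α)) * Real.log (∑ i, rpow0 (p i) α * rpow0 (q i) (1 - α))
  else (1 / (α - 1)) * Real.log (∑ i, rpow0 (p i) α * rpow0 (q i) (1 - α))

/-- The Rényi entropy `H_α(p) = (sgn α / (1-α)) ln ∑ p_i^α`, with `H_1` the Shannon entropy. -/
noncomputable def renyiH {ι : Type*} [Fintype ι] (α : ℝ) (p : ι → ℝ) : ℝ :=
  if α = 1 then -∑ i, p i * Real.log (p i)
  else ((if 0 ≤ α then (1 : ℝ) else -1) / (1 - α)) * Real.log (∑ i, rpow0 (p i) α)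

/-- Trace (total variation) distance between probability vectors. -/
noncomputable def traceDist {ι : Type*} [Fintype ι] (p p' : ι → ℝ) : ℝ :=
  (1 / 2) * ∑ i, |p i - p' i|

/-- Tensor product of two vectors: `(p ⊗ r)_{(i,j)} = p_i r_j`. -/
def tensorVec {ι κ : Type*} (p : ι → ℝ) (r : κ → ℝ) : ι × κ → ℝ :=
  fun x => p x.1 * r x.2

/-- The `n`-fold tensor power of `p`: `(p^{⊗n})_{(i₁,…,iₙ)} = p_{i₁}⋯p_{iₙ}`. -/
def tensorPow {d : ℕ} (p : Fin d → ℝ) (n : ℕ) : (Fin n → Fin d) → ℝ :=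
  fun f => ∏ k, p (f k)

/-- Max-relative entropy `D_∞(p̃‖Q) = ln max_i (p̃_i / Q_i)`. -/
noncomputable def Dmax {ι : Type*} [Fintype ι] (pt Q : ι → ℝ) : ℝ :=
  Real.log (sSup (Set.range fun i => pt i / Q i))

/-- Min-relative entropy `D_0(p̃‖Q) = −ln ∑_{i : p̃_i > 0} Q_i`. -/
noncomputable def Dmin {ι : Type*} [Fintype ι] (pt Q : ι → ℝ) : ℝ :=
  -Real.log (∑ i ∈ Finset.univ.filter (fun i => 0 < pt i), Q i)

/-- Smoothed max-divergence `D_∞^ε(p^{⊗n}‖q^{⊗n})`: infimum of `D_∞(p̃‖q^{⊗n})` over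
probability vectors `p̃` within trace distance `ε` of `p^{⊗n}`. -/
noncomputable def DmaxSmooth {d : ℕ} (ε : ℝ) (n : ℕ) (p q : Fin d → ℝ) : ℝ :=
  sInf {x : ℝ | ∃ pt : (Fin n → Fin d) → ℝ,
    IsProbVec pt ∧ traceDist pt (tensorPow p n) ≤ ε ∧ x = Dmax pt (tensorPow q n)}

/-- Smoothed min-divergence `D_0^ε(p^{⊗n}‖q^{⊗n})`: supremum of `D_0(p̃‖q^{⊗n})` over
probability vectors `p̃` within trace distance `ε` of `p^{⊗n}`. -/
noncomputable def DminSmooth {d : ℕ} (ε : ℝ) (n : ℕ) (p q : Fin d → ℝ) : ℝ :=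
  sSup {x : ℝ | ∃ pt : (Fin n → Fin d) → ℝ,
    IsProbVec pt ∧ traceDist pt (tensorPow p n) ≤ ε ∧ x = Dmin pt (tensorPow q n)}

lemma aux_moments {d : ℕ} (p h : Fin d → ℝ) (hp : ∑ i, p i = 1) (hh : ∑ i, p i * h i = 0) (n : ℕ) :
    (∑ f, tensorPow p n f = 1) ∧ (∑ f, tensorPow p n f * (∑ k, h (f k)) = 0) ∧
    (∑ f, tensorPow p n f * (∑ k, h (f k)) ^ 2 = n * ∑ i, p i * h i ^ 2) := by
  induction n with
  | zero => simp [tensorPow]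
  | succ n ih =>
    obtain ⟨h1, h2, h3⟩ := ih
    have key : ∀ F : (Fin (n+1) → Fin d) → ℝ, ∑ f, F f = ∑ i, ∑ f : Fin n → Fin d, F (Fin.cons i f) := by
      intro F
      rw [← (Fin.consEquiv (fun _ => Fin d)).sum_comp, Fintype.sum_prod_type]
      rfl
    have t : ∀ i (f : Fin n → Fin d), tensorPow p (n+1) (Fin.cons i f) = p i * tensorPow p n f := by
      intro i f
      simp [tensorPow, Fin.prod_univ_succ]
    have u : ∀ i (f : Fin n → Fin d), ∑ k, h ((Fin.cons i f : Fin (n+1) → Fin d) k) = h i + ∑ k, h (f k) := by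
      intro i f
      simp [Fin.sum_univ_succ]
    refine ⟨?_, ?_, ?_⟩
    · rw [key]
      simp only [t, ← Finset.mul_sum, h1, mul_one, hp]
    · rw [key]
      simp only [t, u]
      have : ∀ i, ∑ f, p i * tensorPow p n f * (h i + ∑ k, h (f k)) = p i * h i := by
        intro i
        calc _ = p i * h i * (∑ f, tensorPow p n f) + p i * ∑ f, tensorPow p n f * (∑ k, h (f k)) := by
              rw [Finset.mul_sum, Finset.mul_sum, ← Finset.sum_add_distrib]
              exact Finset.sum_congr rfl fun f _ => by ring
          _ = _ := by rw [h1, h2]; ring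
      simp only [this, hh]
    · rw [key]
      simp only [t, u]
      have : ∀ i, ∑ f, p i * tensorPow p n f * (h i + ∑ k, h (f k)) ^ 2
          = p i * h i ^ 2 + p i * (n * ∑ i, p i * h i ^ 2) := by
        intro i
        calc _ = p i * h i ^ 2 * (∑ f, tensorPow p n f)
              + 2 * p i * h i * (∑ f, tensorPow p n f * (∑ k, h (f k)))
              + p i * ∑ f, tensorPow p n f * (∑ k, h (f k)) ^ 2 := by
              rw [Finset.mul_sum, Finset.mul_sum, Finset.mul_sum, ← Finset.sum_add_distrib,
                ← Finset.sum_add_distrib]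
              exact Finset.sum_congr rfl fun f _ => by ring
          _ = _ := by rw [h1, h2, h3]; ring
      simp only [this]
      rw [Finset.sum_add_distrib, ← Finset.sum_mul, hp]
      push_cast
      ring

lemma aux_cheb {ι : Type*} [Fintype ι] (P X : ι → ℝ) (hP : ∀ i, 0 ≤ P i) (c : ℝ) (hc : 0 < c) :
    ∑ i ∈ Finset.univ.filter (fun i => ¬ |X i| ≤ c), P i ≤ (∑ i, P i * X i ^ 2) / c ^ 2 := by
  rw [le_div_iff₀ (by positivity), Finset.sum_mul]
  refine (Finset.sum_le_sum (g := fun i => P i * X i ^ 2) ?_).trans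
    (Finset.sum_le_sum_of_subset_of_nonneg (Finset.filter_subset _ _)
      fun i _ _ => mul_nonneg (hP i) (sq_nonneg _))
  intro i hi
  simp only [Finset.mem_filter, not_le] at hi
  have : c ^ 2 ≤ X i ^ 2 := by
    rw [← sq_abs (X i)]
    exact pow_le_pow_left₀ hc.le hi.2.le 2
  exact mul_le_mul_of_nonneg_left this (hP i)

lemma aux_upper {ι : Type*} [Fintype ι] (P Q pt : ι → ℝ) (hP : IsProbVec P)
    (hQ : ∀ i, 0 ≤ Q i) (hpt : IsProbVec pt) (ε η a : ℝ) (hd : traceDist pt P ≤ ε)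
    (T : ι → Prop) [DecidablePred T] (hT : ∀ i, T i → P i ≤ Real.exp a * Q i)
    (hη : ∑ i ∈ Finset.univ.filter (fun i => ¬ T i), P i ≤ η) (h1 : 0 < 1 - ε - η) :
    Dmin pt Q ≤ a - Real.log (1 - ε - η) := by
  classical
  have e1 : ∑ i ∈ Finset.univ.filter (fun i => ¬ 0 < pt i), P i ≤ ε := by
    refine le_trans ?_ hd
    unfold traceDist
    have hs : ∑ i, (P i - pt i) = 0 := by
      rw [Finset.sum_sub_distrib, hP.2, hpt.2, sub_self]
    have : ∑ i ∈ Finset.univ.filter (fun i => ¬ 0 < pt i), P i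
        ≤ ∑ i, (1/2) * (|pt i - P i| + (P i - pt i)) := by
      rw [Finset.sum_filter]
      refine Finset.sum_le_sum fun i _ => ?_
      have := hpt.1 i
      have a1 := neg_abs_le (pt i - P i)
      have a2 := le_abs_self (pt i - P i)
      by_cases hh : 0 < pt i
      · rw [if_neg (not_not.2 hh)]
        linarith
      · rw [if_pos hh]
        have : pt i = 0 := le_antisymm (not_lt.1 hh) this
        linarith
    rw [← Finset.mul_sum, Finset.sum_add_distrib, hs, add_zero] at this
    exact this
  have e2 : 1 - ε - η ≤ ∑ i ∈ Finset.univ.filter (fun i => 0 < pt i), Real.exp a * Q i := by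
    have : ∑ i, P i ≤ ∑ i ∈ Finset.univ.filter (fun i => ¬ 0 < pt i), P i
        + ∑ i ∈ Finset.univ.filter (fun i => ¬ T i), P i
        + ∑ i ∈ Finset.univ.filter (fun i => 0 < pt i), Real.exp a * Q i := by
      simp only [Finset.sum_filter]
      rw [← Finset.sum_add_distrib, ← Finset.sum_add_distrib]
      refine Finset.sum_le_sum fun i _ => ?_
      have b1 := hP.1 i
      have b2 := mul_nonneg (Real.exp_pos a).le (hQ i)
      by_cases c1 : 0 < pt i <;> by_cases c2 : T i <;> simp only [c1, c2, if_true, if_false, not_true, not_false_eq_true]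
      · linarith [hT i c2]
      all_goals linarith
    rw [hP.2] at this
    linarith
  rw [← Finset.mul_sum] at e2
  unfold Dmin
  set S := ∑ i ∈ Finset.univ.filter (fun i => 0 < pt i), Q i
  have hS : 0 < S := by
    by_contra hS
    have := mul_nonpos_of_nonneg_of_nonpos (Real.exp_pos a).le (not_lt.1 hS)
    linarith
  have := Real.log_le_log h1 e2
  rw [Real.log_mul (Real.exp_pos a).ne' hS.ne', Real.log_exp] at this
  linarith

lemma aux_lower {ι : Type*} [Fintype ι] (P Q : ι → ℝ) (hP : IsProbVec P) (hPp : ∀ i, 0 < P i)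
    (hQ : ∀ i, 0 < Q i) (ε a : ℝ) (hε : ε < 1)
    (T : ι → Prop) [DecidablePred T] (hT : ∀ i, T i → Real.exp a * Q i ≤ P i)
    (hη : ∑ i ∈ Finset.univ.filter (fun i => ¬ T i), P i ≤ ε) :
    ∃ pt, IsProbVec pt ∧ traceDist pt P ≤ ε ∧ a ≤ Dmin pt Q := by
  classical
  have hsum := Finset.sum_filter_add_sum_filter_not Finset.univ T P
  rw [hP.2] at hsum
  set S := ∑ i ∈ Finset.univ.filter T, P i with hSdef
  have hS : 0 < S := by linarith
  have hS1 : S ≤ 1 := by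
    have : 0 ≤ ∑ i ∈ Finset.univ.filter (fun i => ¬ T i), P i :=
      Finset.sum_nonneg fun i _ => hP.1 i
    linarith
  refine ⟨fun i => if T i then P i / S else 0, ⟨?_, ?_⟩, ?_, ?_⟩
  · intro i
    dsimp only
    split_ifs
    · exact div_nonneg (hP.1 i) hS.le
    · exact le_rfl
  · rw [← Finset.sum_filter, ← Finset.sum_div, ← hSdef, div_self hS.ne']
  · unfold traceDist
    have : ∀ i, |(if T i then P i / S else 0) - P i|
        = (if T i then P i * (1 / S - 1) else 0) + (if ¬ T i then P i else 0) := by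
      intro i
      by_cases c : T i
      · have h1 : 1 ≤ 1 / S := by rw [le_div_iff₀ hS]; linarith
        simp only [c, if_true, not_true, if_false, add_zero]
        rw [show P i / S - P i = P i * (1 / S - 1) by ring]
        exact abs_of_nonneg (mul_nonneg (hP.1 i) (by linarith))
      · simp [c, abs_of_nonneg (hP.1 i)]
    simp only [this]
    rw [Finset.sum_add_distrib, ← Finset.sum_filter, ← Finset.sum_filter, ← Finset.sum_mul, ← hSdef]
    have : S * (1 / S - 1) = 1 - S := by field_simp
    rw [this]
    linarith
  · unfold Dmin
    have hf : Finset.univ.filter (fun i => 0 < if T i then P i / S else 0) = Finset.univ.filter T := by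
      ext i
      by_cases c : T i
      · simp [c, div_pos (hPp i) hS]
      · simp [c]
    rw [hf]
    have hne : (Finset.univ.filter T).Nonempty := by
      by_contra hne
      rw [Finset.not_nonempty_iff_eq_empty] at hne
      rw [hSdef, hne] at hS
      simp at hS
    have hQS : 0 < ∑ i ∈ Finset.univ.filter T, Q i := Finset.sum_pos (fun i _ => hQ i) hne
    have h2 : Real.exp a * ∑ i ∈ Finset.univ.filter T, Q i ≤ 1 := by
      rw [Finset.mul_sum]
      refine le_trans (Finset.sum_le_sum fun i hi => hT i ?_) hS1
      exact (Finset.mem_filter.1 hi).2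
    have := Real.log_le_log (mul_pos (Real.exp_pos a) hQS) h2
    rw [Real.log_mul (Real.exp_pos a).ne' hQS.ne', Real.log_exp, Real.log_one] at this
    linarith

lemma aux_big {d : ℕ} (p q : Fin d → ℝ) (hp : IsProbVec p) (hppos : ∀ i, 0 < p i)
    (hqpos : ∀ i, 0 < q i) (m : Fin d) (hm : ∀ i, q m ≤ q i) (ε : ℝ) (hε : 1 ≤ ε) (n : ℕ) :
    DminSmooth ε n p q = n * (-Real.log (q m)) := by
  classical
  have hP : IsProbVec (tensorPow p n) :=
    ⟨fun f => Finset.prod_nonneg fun k _ => (hppos _).le,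
      (aux_moments p 0 hp.2 (by simp) n).1⟩
  have hQpos : ∀ f, 0 < tensorPow q n f := fun f => Finset.prod_pos fun k _ => hqpos _
  have hlog : (n : ℝ) * (-Real.log (q m)) = - Real.log (q m ^ n) := by
    rw [Real.log_pow]; ring
  apply IsGreatest.csSup_eq
  constructor
  · have hpt : IsProbVec (fun f : Fin n → Fin d => if f = (fun _ => m) then (1:ℝ) else 0) := by
      constructor
      · intro f
        dsimp only
        split_ifs <;> norm_num
      · simp
    refine ⟨_, hpt, ?_, ?_⟩
    · refine le_trans ?_ hε
      unfold traceDist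
      have : ∑ f, |(if f = (fun _ => m) then (1:ℝ) else 0) - tensorPow p n f|
          ≤ ∑ f : Fin n → Fin d, ((if f = (fun _ => m) then (1:ℝ) else 0) + tensorPow p n f) := by
        refine Finset.sum_le_sum fun f _ => ?_
        have h1 := hpt.1 f
        have h2 := hP.1 f
        dsimp only at h1
        rw [abs_le]
        constructor <;> linarith
      rw [Finset.sum_add_distrib, hP.2, hpt.2] at this
      linarith
    · unfold Dmin
      have : Finset.univ.filter (fun f : Fin n → Fin d => 0 < if f = (fun _ => m) then (1:ℝ) else 0)
          = {fun _ => m} := by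
        ext f
        by_cases c : f = fun _ => m <;> simp [c]
      rw [this, hlog]
      simp [tensorPow]
  · rintro x ⟨pt, hpt, -, rfl⟩
    unfold Dmin
    rw [hlog, neg_le_neg_iff]
    have : ∃ f, 0 < pt f := by
      by_contra! hc
      have := Finset.sum_nonpos fun f (_ : f ∈ Finset.univ) => hc f
      rw [hpt.2] at this
      linarith
    obtain ⟨f, hf⟩ := this
    refine Real.log_le_log (pow_pos (hqpos m) n) ?_
    calc q m ^ n = ∏ _k : Fin n, q m := by simp
      _ ≤ tensorPow q n f := Finset.prod_le_prod (fun _ _ => (hqpos m).le) fun k _ => hm _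
      _ ≤ _ := Finset.single_le_sum (f := tensorPow q n) (fun g _ => (hQpos g).le) (by simpa using hf)

lemma aux_small {d : ℕ} (p q : Fin d → ℝ) (hp : IsProbVec p) (hppos : ∀ i, 0 < p i)
    (hqpos : ∀ i, 0 < q i) (ε : ℝ) (hε0 : 0 < ε) (hε : ε < 1) :
    Filter.Tendsto (fun n : ℕ => DminSmooth ε n p q / (n : ℝ))
          Filter.atTop (𝓝 (∑ i, p i * Real.log (p i / q i))) := by
  classical
  set D := ∑ i, p i * Real.log (p i / q i) with hD
  set h : Fin d → ℝ := fun i => Real.log (p i / q i) - D with hh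
  have hh0 : ∑ i, p i * h i = 0 := by
    simp only [hh, mul_sub]
    rw [Finset.sum_sub_distrib, ← Finset.sum_mul, hp.2, ← hD]
    ring
  set V := ∑ i, p i * h i ^ 2 with hV
  rw [Metric.tendsto_atTop']
  intro r hr
  -- constants
  set δ := r / 4 with hδ
  have hδ0 : 0 < δ := by positivity
  have lim1 : Tendsto (fun n : ℕ => V / δ ^ 2 / (n : ℝ)) atTop (𝓝 0) :=
    tendsto_const_div_atTop_nhds_zero_nat _
  have lim2 : Tendsto (fun n : ℕ => (- Real.log ((1 - ε) / 2)) / (n : ℝ)) atTop (𝓝 0) :=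
    tendsto_const_div_atTop_nhds_zero_nat _
  have ev1 := lim1.eventually (gt_mem_nhds (show 0 < min ε ((1 - ε) / 2) from lt_min hε0 (by linarith)))
  have ev2 := lim2.eventually (gt_mem_nhds hδ0)
  obtain ⟨N, hN⟩ := eventually_atTop.1 (ev1.and ev2)
  refine ⟨N, fun n hn => ?_⟩
  obtain ⟨c1, c2⟩ := hN n hn.le
  have hn0 : (0 : ℝ) < n := by exact_mod_cast (Nat.zero_le N).trans_lt hn
  obtain ⟨m1, -, m3⟩ := aux_moments p h hp.2 hh0 n
  have hPp : ∀ f, 0 < tensorPow p n f := fun f => Finset.prod_pos fun k _ => hppos _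
  have hQp : ∀ f, 0 < tensorPow q n f := fun f => Finset.prod_pos fun k _ => hqpos _
  have hP : IsProbVec (tensorPow p n) := ⟨fun f => (hPp f).le, m1⟩
  set X : (Fin n → Fin d) → ℝ := fun f => ∑ k, h (f k) with hX
  have hPQ : ∀ f, tensorPow p n f = Real.exp (X f + n * D) * tensorPow q n f := by
    intro f
    have : X f + n * D = ∑ k, Real.log (p (f k) / q (f k)) := by
      simp [hX, hh, Finset.sum_sub_distrib]
    rw [this, Real.exp_sum]
    unfold tensorPow
    rw [← Finset.prod_mul_distrib]
    refine Finset.prod_congr rfl fun k _ => ?_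
    rw [Real.exp_log (div_pos (hppos _) (hqpos _)), div_mul_cancel₀ _ (hqpos _).ne']
  have cheb := aux_cheb (tensorPow p n) X hP.1 (n * δ) (by positivity)
  rw [m3] at cheb
  have hV2 : (n : ℝ) * V / (n * δ) ^ 2 = V / δ ^ 2 / n := by
    field_simp
  rw [← hV, hV2] at cheb
  have cε := c1.trans_le (min_le_left _ _)
  have cη := c1.trans_le (min_le_right _ _)
  have hub : ∀ x ∈ {x : ℝ | ∃ pt : (Fin n → Fin d) → ℝ,
    IsProbVec pt ∧ traceDist pt (tensorPow p n) ≤ ε ∧ x = Dmin pt (tensorPow q n)},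
      x ≤ n * (D + δ) - Real.log ((1 - ε) / 2) := by
    rintro x ⟨pt, hpt, hd, rfl⟩
    have := aux_upper (tensorPow p n) (tensorPow q n) pt hP (fun f => (hQp f).le) hpt ε ((1 - ε) / 2)
      (n * (D + δ)) hd (fun f => |X f| ≤ n * δ) (fun f hf => by
        rw [hPQ f]
        refine mul_le_mul_of_nonneg_right (Real.exp_le_exp.2 ?_) (hQp f).le
        have := (abs_le.1 hf).2
        linarith) (cheb.trans cη.le) (by linarith)
    rwa [show 1 - ε - (1 - ε) / 2 = (1 - ε) / 2 by ring] at this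
  obtain ⟨pt, hpt, hd, hlow⟩ := aux_lower (tensorPow p n) (tensorPow q n) hP hPp hQp ε
      (n * (D - δ)) hε (fun f => |X f| ≤ n * δ) (fun f hf => by
        rw [hPQ f]
        refine mul_le_mul_of_nonneg_right (Real.exp_le_exp.2 ?_) (hQp f).le
        have := (abs_le.1 hf).1
        linarith) (cheb.trans cε.le)
  have U : DminSmooth ε n p q ≤ n * (D + δ) - Real.log ((1 - ε) / 2) :=
    csSup_le ⟨_, pt, hpt, hd, rfl⟩ hub
  have Lo : n * (D - δ) ≤ DminSmooth ε n p q :=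
    hlow.trans (le_csSup ⟨_, hub⟩ ⟨pt, hpt, hd, rfl⟩)
  rw [div_lt_iff₀ hn0] at c2
  have U2 : DminSmooth ε n p q / n ≤ D + 2 * δ := by
    rw [div_le_iff₀ hn0]; linarith
  have L2 : D - δ ≤ DminSmooth ε n p q / n := by
    rw [le_div_iff₀ hn0]; linarith
  rw [Real.dist_eq, abs_lt]
  constructor <;> linarith

/-- **Asymptotic equipartition for the smoothed min-divergence (Eq. (30), `α = 0`;
Stein's lemma).** `lim_{ε→0⁺} lim_{n→∞} (1/n) D_0^ε(p^{⊗n}‖q^{⊗n}) = D_1(p‖q)`. -/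
theorem smoothed_Dmin_iid_limit {d : ℕ} (p q : Fin d → ℝ)
    (hp : IsProbVec p) (hq : IsProbVec q)
    (hppos : ∀ i, 0 < p i) (hqpos : ∀ i, 0 < q i) :
    ∃ L : ℝ → ℝ,
      (∀ ε : ℝ, 0 < ε →
        Filter.Tendsto (fun n : ℕ => DminSmooth ε n p q / (n : ℝ))
          Filter.atTop (𝓝 (L ε))) ∧
      Filter.Tendsto L (𝓝[>] (0 : ℝ)) (𝓝 (∑ i, p i * Real.log (p i / q i))) := by
  classical
  have hne : Nonempty (Fin d) := by
    by_contra hc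
    rw [not_nonempty_iff] at hc
    have := hp.2
    simp at this
  obtain ⟨m, hm⟩ := Finite.exists_min q
  refine ⟨fun ε => if ε < 1 then ∑ i, p i * Real.log (p i / q i) else -Real.log (q m), ?_, ?_⟩
  · intro ε hε
    by_cases c : ε < 1
    · simp only [c, if_true]
      exact aux_small p q hp hppos hqpos ε hε c
    · simp only [c, if_false]
      refine Tendsto.congr' ?_ tendsto_const_nhds
      filter_upwards [eventually_gt_atTop 0] with n hn
      have hn0 : (n : ℝ) ≠ 0 := by exact_mod_cast hn.ne'
      rw [aux_big p q hp hppos hqpos m hm ε (not_lt.1 c) n, mul_div_cancel_left₀ _ hn0]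
  · refine Tendsto.congr' ?_ tendsto_const_nhds
    filter_upwards [Ioo_mem_nhdsGT (show (0:ℝ) < 1 by norm_num)] with ε hε
    rw [if_pos hε.2]
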